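/- arXiv:math/0606205 — 3 statements merged into one kernel-verified Lean document; each statement's English description precedes it below -/
import Mathlib

section
/- Let φ be an RDS over θ on a compact metric space X, with (Ω, 𝓕, ℙ) a complete probability space. Assume N is a random closed set and A is an invariant random compact set with A(ω) ⊆ int N(ω) for all ω and Ω_N(ω) = A(ω). Then there exists a forward invariant random closed set N̂ such that, almost surely, A(ω) ⊆ int N̂(ω) and Ω_{N̂}(ω) = A(ω). -/
/-!
The forward invariant neighbourhood is the closed forward hull
`closure (⋃ t ≥ 0, φ(t, θ₋ₜω) N(θ₋ₜω))`. By the cocycle property it is forward invariant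
(`closedHull_fwdInvariant`) and has the same omega-limit set as `N` (`rOmegaLimit_closedHull`), and
it contains `N`, so it is a neighbourhood of `A`. All of this holds for every `ω`.

What remains is measurability, where the union over `t` is uncountable. The distance from `x` to
the hull is less than `a` iff some `(t, y)` in the Polish space `ℝ × X` satisfies a jointly
measurable condition, so the measurable projection theorem `measurableSet_image_fst` applies; this
is where completeness of `μ` enters. The projection theorem is proved by pulling back along a map to
Cantor space and using that analytic sets are universally measurable
(`analyticSet_nullMeasurableSet`).

Because `infDist x ∅ = 0`, the measurability condition on a random closed set does not separate the
values `∅` and `univ`. On the measurable invariant set where `A ω` is `∅` or `univ`, the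
neighbourhood is therefore taken to be `A` itself; elsewhere `A ω`, hence `N ω`, is nonempty.
-/


open MeasureTheory Set Filter Metric Topology

/-- A metric dynamical system: a measurable measure-preserving flow `θ`
on a probability space `(Ω, 𝓕, μ)`. -/
structure MetricDS (Ω : Type*) [MeasurableSpace Ω] (μ : Measure Ω) where
  θ : ℝ → Ω → Ω
  measurable_flow : Measurable fun p : ℝ × Ω => θ p.1 p.2
  theta_zero : ∀ ω, θ 0 ω = ω
  theta_add : ∀ t s ω, θ (t + s) ω = θ t (θ s ω)
  measurePreserving : ∀ t, MeasurePreserving (θ t) μ μ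

/-- A continuous random dynamical system over the flow `θ`. -/
structure RDS (Ω X : Type*) [MeasurableSpace Ω] [MeasurableSpace X]
    [MetricSpace X] (θ : ℝ → Ω → Ω) where
  φ : ℝ → Ω → X → X
  measurable_phi : Measurable fun p : ℝ × Ω × X => φ p.1 p.2.1 p.2.2
  continuous_phi : ∀ ω, Continuous fun p : ℝ × X => φ p.1 ω p.2
  phi_zero : ∀ ω x, φ 0 ω x = x
  cocycle : ∀ t s ω x, φ (t + s) ω x = φ t (θ s ω) (φ s ω x)

variable {Ω X : Type*} [MeasurableSpace Ω] [MeasurableSpace X] [MetricSpace X]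

/-- The omega-limit set of a random set `D`. -/
def rOmegaLimit {θ : ℝ → Ω → Ω} (Φ : RDS Ω X θ) (D : Ω → Set X) (ω : Ω) : Set X :=
  ⋂ T ∈ Ici (0:ℝ), closure (⋃ t ∈ Ici T, Φ.φ t (θ (-t) ω) '' D (θ (-t) ω))

/-- The alpha-limit set of a random set `D`. -/
def rAlphaLimit {θ : ℝ → Ω → Ω} (Φ : RDS Ω X θ) (D : Ω → Set X) (ω : Ω) : Set X :=
  ⋂ T ∈ Ici (0:ℝ), closure (⋃ t ∈ Ici T, Φ.φ (-t) (θ t ω) '' D (θ t ω))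

/-- A random closed set. -/
def IsRandomClosed (D : Ω → Set X) : Prop :=
  (∀ ω, IsClosed (D ω)) ∧ ∀ x : X, Measurable fun ω => infDist x (D ω)

/-- A random compact set. -/
def IsRandomCompact (D : Ω → Set X) : Prop :=
  (∀ ω, IsCompact (D ω)) ∧ ∀ x : X, Measurable fun ω => infDist x (D ω)

/-- Forward invariance of a random set under the RDS. -/
def FwdInvariant {θ : ℝ → Ω → Ω} (Φ : RDS Ω X θ) (D : Ω → Set X) : Prop :=
  ∀ t : ℝ, 0 ≤ t → ∀ ω, Φ.φ t ω '' D ω ⊆ D (θ t ω)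

/-- Invariance of a random set under the RDS. -/
def RInvariant {θ : ℝ → Ω → Ω} (Φ : RDS Ω X θ) (D : Ω → Set X) : Prop :=
  ∀ (t : ℝ) (ω : Ω), Φ.φ t ω '' D ω = D (θ t ω)

/-- `N` is a fundamental neighborhood of the set `A`. -/
def IsFundNbhd {θ : ℝ → Ω → Ω} (Φ : RDS Ω X θ) (A N : Ω → Set X) : Prop :=
  IsRandomClosed N ∧ (∀ ω, A ω ⊆ interior (N ω)) ∧ ∀ ω, rOmegaLimit Φ N ω = A ω

/-- `N` is a strong fundamental neighborhood of the set `A`. -/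
def IsStrongFundNbhd {θ : ℝ → Ω → Ω} (Φ : RDS Ω X θ) (A N : Ω → Set X) : Prop :=
  IsFundNbhd Φ A N ∧ FwdInvariant Φ N ∧
    ∀ ω, ∀ x ∈ N ω, ∀ t : ℝ, 0 < t → Φ.φ t ω x ∈ interior (N (θ t ω))

/-- `A` is a (local) random attractor. -/
def IsAttractor {θ : ℝ → Ω → Ω} (Φ : RDS Ω X θ) (A : Ω → Set X) : Prop :=
  IsRandomCompact A ∧ RInvariant Φ A ∧ ∃ N, IsFundNbhd Φ A N

/-- The basin of attraction determined by a fundamental neighborhood `N`. -/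
def attrBasin {θ : ℝ → Ω → Ω} (Φ : RDS Ω X θ) (N : Ω → Set X) (ω : Ω) : Set X :=
  {x | ∃ t : ℝ, 0 ≤ t ∧ Φ.φ t ω x ∈ interior (N (θ t ω))}

/-- `M` is a fundamental neighborhood of the repeller `R`. -/
def IsRepellerNbhd {θ : ℝ → Ω → Ω} (Φ : RDS Ω X θ) (R M : Ω → Set X) : Prop :=
  IsRandomClosed M ∧ (∀ ω, R ω ⊆ interior (M ω)) ∧ ∀ ω, rAlphaLimit Φ M ω = R ω

/-- `R` is a (local) random repeller. -/
def IsRepeller {θ : ℝ → Ω → Ω} (Φ : RDS Ω X θ) (R : Ω → Set X) : Prop :=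
  IsRandomCompact R ∧ RInvariant Φ R ∧ ∃ M, IsRepellerNbhd Φ R M

/-- The basin of repulsion determined by a fundamental neighborhood `M`. -/
def repBasin {θ : ℝ → Ω → Ω} (Φ : RDS Ω X θ) (M : Ω → Set X) (ω : Ω) : Set X :=
  {x | ∃ t : ℝ, t ≤ 0 ∧ Φ.φ t ω x ∈ interior (M (θ t ω))}

/-- `(A, R)` is an attractor-repeller pair: `A` is an attractor and `R` is the
complement of its basin of attraction. -/
def IsAttractorRepellerPair {θ : ℝ → Ω → Ω} (Φ : RDS Ω X θ) (A R : Ω → Set X) : Prop :=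
  IsRandomCompact A ∧ RInvariant Φ A ∧
    ∃ N, IsFundNbhd Φ A N ∧ ∀ ω, R ω = (attrBasin Φ N ω)ᶜ

/-- The Hausdorff semi-metric `d(E|F) = sup_{x ∈ E} inf_{y ∈ F} d(x,y)`. -/
noncomputable def semiDist (E F : Set X) : ℝ := ⨆ x ∈ E, infDist x F

/-- `M` is a Morse decomposition for the RDS `Φ`. -/
def IsMorseDecomposition {θ : ℝ → Ω → Ω} (Φ : RDS Ω X θ) {n : ℕ}
    (M : Fin n → Ω → Set X) : Prop :=
  ∃ A R : Fin (n+1) → Ω → Set X,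
    (∀ ω, A 0 ω = (∅ : Set X)) ∧ (∀ ω, A (Fin.last n) ω = univ) ∧
    (∀ i : Fin n, ∀ ω, A i.castSucc ω ⊂ A i.succ ω) ∧
    (∀ i, IsAttractorRepellerPair Φ (A i) (R i)) ∧
    (∀ i : Fin n, ∀ ω, M i ω = A i.succ ω ∩ R i.castSucc ω)

/-! ### The measurable projection theorem -/

/-- A jointly measurable set involves only countably many measurable subsets of `Ω`, so it is the
pullback of a measurable set along a map from `Ω` to Cantor space. -/
theorem exists_cantor_pullback {Ω Y : Type*} [MeasurableSpace Ω] [MeasurableSpace Y]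
    {S : Set (Ω × Y)} (hS : MeasurableSet S) :
    ∃ g : Ω → ℕ → Bool, Measurable g ∧ ∃ S' : Set ((ℕ → Bool) × Y), MeasurableSet S' ∧
      S = (fun p : Ω × Y => (g p.1, p.2)) ⁻¹' S' := by
  classical
  have hgen := (generateFrom_prod (α := Ω) (β := Y)).symm
  rw [hgen] at hS
  induction S, hS using MeasurableSpace.generateFrom_induction with
  | hC s hs _ =>
    obtain ⟨a, ha, b, hb, rfl⟩ := hs
    refine ⟨fun ω _ => decide (ω ∈ a), ?_, {p | p.1 0 = true} ∩ {p | p.2 ∈ b}, ?_, ?_⟩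
    · refine measurable_pi_lambda _ fun _ => ?_
      exact measurable_to_bool (by simpa [preimage] using ha)
    · refine MeasurableSet.inter ?_ (measurable_snd hb)
      have h0 : Measurable fun p : (ℕ → Bool) × Y => p.1 0 :=
        (measurable_pi_apply 0).comp measurable_fst
      exact h0 (measurableSet_singleton true)
    · ext ⟨ω, y⟩
      simp
  | empty => exact ⟨fun _ _ => true, measurable_const, ∅, MeasurableSet.empty, by simp⟩
  | compl s _ ih =>
    obtain ⟨g, hg, S', hS', rfl⟩ := ih
    exact ⟨g, hg, S'ᶜ, hS'.compl, rfl⟩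
  | iUnion s _ ih =>
    choose g hg S' hS' h using ih
    refine ⟨fun ω n => g n.unpair.1 ω n.unpair.2, ?_,
      ⋃ i, (fun p : (ℕ → Bool) × Y => ((fun k => p.1 (Nat.pair i k)), p.2)) ⁻¹' S' i, ?_, ?_⟩
    · exact measurable_pi_lambda _ fun n => (measurable_pi_apply _).comp (hg _)
    · refine MeasurableSet.iUnion fun i => ?_
      refine Measurable.prodMk ?_ measurable_snd (hS' i)
      exact measurable_pi_lambda _ fun k => (measurable_pi_apply _).comp measurable_fst
    · ext ⟨ω, y⟩
      simp only [mem_iUnion, preimage_iUnion, mem_preimage, Nat.unpair_pair]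
      refine exists_congr fun i => ?_
      rw [h i]
      rfl

/-- Inner approximation of the image of Baire space by compact sets. The numbers `m k` bounding the
coordinates are chosen one after the other so that the image keeps outer measure above `c`. -/
theorem exists_compact_of_lt_measure_range {Z : Type*} [TopologicalSpace Z] [MeasurableSpace Z]
    (μ : Measure Z) [μ.OuterRegular] {f : (ℕ → ℕ) → Z} (hf : Continuous f)
    {c : ENNReal} (hc : c < μ (range f)) :
    ∃ K ⊆ range f, IsCompact K ∧ c ≤ μ K := by
  have step : ∀ (k : ℕ) (C : {C : Set (ℕ → ℕ) // c < μ (f '' C)}),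
      ∃ m : ℕ, c < μ (f '' (C.1 ∩ {x | x k ≤ m})) := by
    rintro k ⟨C, hC⟩
    have hmono : Monotone fun m : ℕ => f '' (C ∩ {x | x k ≤ m}) := by
      intro a b hab
      refine image_mono (inter_subset_inter_right _ fun x hx => ?_)
      exact le_trans hx hab
    have hU : f '' C = ⋃ m : ℕ, f '' (C ∩ {x | x k ≤ m}) := by
      rw [← image_iUnion, ← inter_iUnion]
      congr 1
      refine (inter_eq_left.2 fun x _ => ?_).symm
      exact mem_iUnion.2 ⟨x k, le_refl (x k)⟩
    rw [hU, hmono.measure_iUnion] at hC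
    exact lt_iSup_iff.1 hC
  choose m hm using step
  let C : ℕ → {C : Set (ℕ → ℕ) // c < μ (f '' C)} := fun n =>
    Nat.rec ⟨univ, by rwa [image_univ]⟩ (fun k C => ⟨C.1 ∩ {x | x k ≤ m k C}, hm k C⟩) n
  let b : ℕ → ℕ := fun k => m k (C k)
  have hC : ∀ n x, (∀ k < n, x k ≤ b k) ↔ x ∈ (C n).1 := by
    intro n x
    induction n with
    | zero => simp [C]
    | succ n ih =>
      have : (C (n + 1)).1 = (C n).1 ∩ {x | x n ≤ b n} := rfl
      rw [this, mem_inter_iff, ← ih]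
      constructor
      · exact fun h => ⟨fun k hk => h k (by omega), h n (by omega)⟩
      · rintro ⟨h1, h2⟩ k hk
        rcases Nat.lt_succ_iff_lt_or_eq.1 hk with h | rfl
        · exact h1 k h
        · exact h2
  let K : Set (ℕ → ℕ) := univ.pi fun k => Iic (b k)
  have hK : IsCompact K := isCompact_univ_pi fun k => (finite_Iic (b k)).isCompact
  refine ⟨f '' K, image_subset_range _ _, hK.image hf, ?_⟩
  rw [Set.measure_eq_iInf_isOpen (f '' K) μ]
  refine le_iInf fun U => le_iInf fun hKU => le_iInf fun hU => ?_
  let _ : MetricSpace (ℕ → ℕ) := PiNat.metricSpaceNatNat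
  obtain ⟨δ, hδ, hδU⟩ :=
    hK.exists_thickening_subset_open (hU.preimage hf) (image_subset_iff.1 hKU)
  obtain ⟨n, hn⟩ := exists_pow_lt_of_lt_one hδ (by norm_num : (1 / 2 : ℝ) < 1)
  refine (C n).2.le.trans (measure_mono (image_subset_iff.2 fun x hx => hδU ?_))
  rw [← hC] at hx
  -- truncating `x` by `b` lands in `K` and does not change the first `n` coordinates
  refine mem_thickening_iff.2 ⟨fun k => min (x k) (b k), fun k _ => min_le_right (x k) (b k), ?_⟩
  refine lt_of_le_of_lt ?_ hn
  rw [← PiNat.mem_cylinder_iff_dist_le]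
  exact fun i hi => (min_eq_left (hx i hi)).symm

/-- Analytic sets are universally measurable. -/
theorem analyticSet_nullMeasurableSet {Z : Type*} [TopologicalSpace Z] [T2Space Z]
    [MeasurableSpace Z] [OpensMeasurableSpace Z] (μ : Measure Z) [IsFiniteMeasure μ]
    [μ.OuterRegular] {s : Set Z} (hs : AnalyticSet s) : NullMeasurableSet s μ := by
  rw [AnalyticSet] at hs
  rcases hs with rfl | ⟨f, hf, rfl⟩
  · exact MeasurableSet.empty.nullMeasurableSet
  rcases eq_or_ne (μ (range f)) 0 with h0 | h0
  · exact NullMeasurableSet.of_null h0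
  obtain ⟨u, -, hu, hlim⟩ := exists_seq_strictMono_tendsto' (bot_lt_iff_ne_bot.2 h0)
  choose K hKs hKc hK using fun n => exists_compact_of_lt_measure_range μ hf (hu n).2
  have hT : MeasurableSet (⋃ n, K n) := MeasurableSet.iUnion fun n => (hKc n).measurableSet
  refine hT.nullMeasurableSet.congr ?_
  refine ae_eq_of_subset_of_measure_ge (iUnion_subset hKs) ?_ hT.nullMeasurableSet
    (measure_ne_top _ _)
  exact le_of_tendsto' hlim fun n => (hK n).trans (measure_mono (subset_iUnion K n))

/-- The measurable projection theorem over a complete finite measure space. -/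
theorem measurableSet_image_fst {Ω Y : Type*} [MeasurableSpace Ω] (μ : Measure Ω)
    [IsFiniteMeasure μ] [μ.IsComplete] [TopologicalSpace Y] [PolishSpace Y] [MeasurableSpace Y]
    [BorelSpace Y] {S : Set (Ω × Y)} (hS : MeasurableSet S) :
    MeasurableSet (Prod.fst '' S) := by
  obtain ⟨g, hg, S', hS', rfl⟩ := exists_cantor_pullback hS
  have himg : Prod.fst '' ((fun p : Ω × Y => (g p.1, p.2)) ⁻¹' S') = g ⁻¹' (Prod.fst '' S') := by
    ext ω
    simp
  rw [himg]
  have : TopologicalSpace.IsCompletelyMetrizableSpace Bool :=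
    TopologicalSpace.IsCompletelyMetrizableSpace.discrete
  have : TopologicalSpace.IsCompletelyMetrizableSpace (ℕ → Bool) :=
    TopologicalSpace.IsCompletelyMetrizableSpace.pi_countable
  have : PolishSpace ((ℕ → Bool) × Y) :=
    { TopologicalSpace.IsCompletelyMetrizableSpace.prod,
      (inferInstance : SecondCountableTopology ((ℕ → Bool) × Y)) with }
  have han : AnalyticSet (Prod.fst '' S') :=
    hS'.analyticSet.image_of_continuous continuous_fst
  have hnull := analyticSet_nullMeasurableSet (μ.map g) han
  exact (hnull.preimage (hg.measurePreserving μ).quasiMeasurePreserving).measurable_of_complete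

/-! ### The closed forward hull -/

theorem phi_neg_cancel {Ω X : Type*} [MeasurableSpace Ω] [MeasurableSpace X] [MetricSpace X]
    {μ : Measure Ω} (Θ : MetricDS Ω μ) (Φ : RDS Ω X Θ.θ) (t : ℝ) (ω : Ω) (x : X) :
    Φ.φ t ω (Φ.φ (-t) (Θ.θ t ω) x) = x := by
  have h := Φ.cocycle t (-t) (Θ.θ t ω) x
  rwa [← Θ.theta_add, neg_add_cancel, Θ.theta_zero, add_neg_cancel, Φ.phi_zero, eq_comm] at h

theorem continuous_phi_apply {Ω X : Type*} [MeasurableSpace Ω] [MeasurableSpace X] [MetricSpace X]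
    {θ : ℝ → Ω → Ω} (Φ : RDS Ω X θ) (t : ℝ) (ω : Ω) : Continuous (Φ.φ t ω) :=
  (Φ.continuous_phi ω).comp (Continuous.prodMk_right t)

/-- The union over `t ≥ T` of the pullback images `φ(t, θ₋ₜω) D(θ₋ₜω)`. -/
def pullbackTail {Ω X : Type*} [MeasurableSpace Ω] [MeasurableSpace X] [MetricSpace X]
    {θ : ℝ → Ω → Ω} (Φ : RDS Ω X θ) (D : Ω → Set X) (T : ℝ) (ω : Ω) : Set X :=
  ⋃ t ∈ Ici T, Φ.φ t (θ (-t) ω) '' D (θ (-t) ω)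

theorem mem_pullbackTail {Ω X : Type*} [MeasurableSpace Ω] [MeasurableSpace X] [MetricSpace X]
    {θ : ℝ → Ω → Ω} (Φ : RDS Ω X θ) (D : Ω → Set X) (T : ℝ) (ω : Ω) (x : X) :
    x ∈ pullbackTail Φ D T ω ↔ ∃ t, T ≤ t ∧ ∃ y ∈ D (θ (-t) ω), Φ.φ t (θ (-t) ω) y = x := by
  simp [pullbackTail]

theorem image_pullbackTail_subset {Ω X : Type*} [MeasurableSpace Ω] [MeasurableSpace X]
    [MetricSpace X] {μ : Measure Ω} (Θ : MetricDS Ω μ) (Φ : RDS Ω X Θ.θ) (D : Ω → Set X)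
    (T s : ℝ) (ω : Ω) :
    Φ.φ s ω '' pullbackTail Φ D T ω ⊆ pullbackTail Φ D (s + T) (Θ.θ s ω) := by
  rintro _ ⟨x, hx, rfl⟩
  obtain ⟨t, ht, y, hy, rfl⟩ := (mem_pullbackTail _ _ _ _ _).1 hx
  have hθ : Θ.θ (-(s + t)) (Θ.θ s ω) = Θ.θ (-t) ω := by
    rw [← Θ.theta_add]; congr 1; ring
  have hθ' : Θ.θ t (Θ.θ (-t) ω) = ω := by
    rw [← Θ.theta_add, add_neg_cancel, Θ.theta_zero]
  refine (mem_pullbackTail _ _ _ _ _).2 ⟨s + t, by linarith, y, ?_, ?_⟩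
  · rwa [hθ]
  · rw [hθ, Φ.cocycle, hθ']

/-- The closed forward hull of `D`: the smallest closed-valued forward invariant family
containing `D`. -/
def closedHull {Ω X : Type*} [MeasurableSpace Ω] [MeasurableSpace X] [MetricSpace X]
    {θ : ℝ → Ω → Ω} (Φ : RDS Ω X θ) (D : Ω → Set X) (ω : Ω) : Set X :=
  closure (pullbackTail Φ D 0 ω)

theorem image_closedHull_subset {Ω X : Type*} [MeasurableSpace Ω] [MeasurableSpace X]
    [MetricSpace X] {μ : Measure Ω} (Θ : MetricDS Ω μ) (Φ : RDS Ω X Θ.θ) (D : Ω → Set X)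
    (s : ℝ) (ω : Ω) :
    Φ.φ s ω '' closedHull Φ D ω ⊆ closure (pullbackTail Φ D s (Θ.θ s ω)) := by
  refine (image_closure_subset_closure_image (continuous_phi_apply Φ s ω)).trans (closure_mono ?_)
  simpa using image_pullbackTail_subset Θ Φ D 0 s ω

theorem closedHull_fwdInvariant {Ω X : Type*} [MeasurableSpace Ω] [MeasurableSpace X]
    [MetricSpace X] {μ : Measure Ω} (Θ : MetricDS Ω μ) (Φ : RDS Ω X Θ.θ) (D : Ω → Set X) :
    FwdInvariant Φ (closedHull Φ D) := by
  intro s hs ω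
  refine (image_closedHull_subset Θ Φ D s ω).trans (closure_mono ?_)
  exact biUnion_subset_biUnion_left (Ici_subset_Ici.2 hs)

theorem subset_closedHull {Ω X : Type*} [MeasurableSpace Ω] [MeasurableSpace X]
    [MetricSpace X] {μ : Measure Ω} (Θ : MetricDS Ω μ) (Φ : RDS Ω X Θ.θ) (D : Ω → Set X)
    (ω : Ω) : D ω ⊆ closedHull Φ D ω := by
  intro x hx
  refine subset_closure ((mem_pullbackTail _ _ _ _ _).2 ⟨0, le_rfl, x, ?_, ?_⟩)
  · rwa [neg_zero, Θ.theta_zero]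
  · rw [Φ.phi_zero]

theorem rOmegaLimit_closedHull {Ω X : Type*} [MeasurableSpace Ω] [MeasurableSpace X]
    [MetricSpace X] {μ : Measure Ω} (Θ : MetricDS Ω μ) (Φ : RDS Ω X Θ.θ) (D : Ω → Set X)
    (ω : Ω) : rOmegaLimit Φ (closedHull Φ D) ω = rOmegaLimit Φ D ω := by
  unfold rOmegaLimit
  refine iInter₂_congr fun T _ => Subset.antisymm ?_ ?_
  · refine closure_minimal (iUnion₂_subset fun t ht => ?_) isClosed_closure
    refine (image_closedHull_subset Θ Φ D t _).trans ?_
    rw [← Θ.theta_add, add_neg_cancel, Θ.theta_zero]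
    exact closure_mono (biUnion_subset_biUnion_left (Ici_subset_Ici.2 ht))
  · exact closure_mono (iUnion₂_mono fun t _ => image_mono (subset_closedHull Θ Φ D _))

theorem rOmegaLimit_of_invariant {Ω X : Type*} [MeasurableSpace Ω] [MeasurableSpace X]
    [MetricSpace X] {μ : Measure Ω} (Θ : MetricDS Ω μ) (Φ : RDS Ω X Θ.θ) {A : Ω → Set X}
    (hA : RInvariant Φ A) {ω : Ω} (hc : IsClosed (A ω)) : rOmegaLimit Φ A ω = A ω := by
  have h : ∀ t : ℝ, Φ.φ t (Θ.θ (-t) ω) '' A (Θ.θ (-t) ω) = A ω := fun t => by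
    rw [hA, ← Θ.theta_add, add_neg_cancel, Θ.theta_zero]
  unfold rOmegaLimit
  simp only [h]
  have h2 : ∀ T : ℝ, (⋃ t ∈ Ici T, A ω) = A ω := fun T => biUnion_const ⟨T, self_mem_Ici⟩ _
  simp only [h2, hc.closure_eq]
  exact biInter_const ⟨0, self_mem_Ici⟩ _

/-- The distance to the closed hull is below `a` exactly on a projection of a measurable subset of
`Ω × (ℝ × X)`. Restricting to an invariant set `G` on which `N` is nonempty
avoids the junk value `infDist x ∅ = 0`. -/
theorem measurableSet_infDist_closedHull_lt {Ω X : Type*} [MeasurableSpace Ω] [MeasurableSpace X]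
    [MetricSpace X] [CompactSpace X] [BorelSpace X] (μ : Measure Ω) [IsFiniteMeasure μ]
    [μ.IsComplete] (Θ : MetricDS Ω μ) (Φ : RDS Ω X Θ.θ) {N : Ω → Set X} (hN : IsRandomClosed N)
    {G : Set Ω} (hG : MeasurableSet G) (hGinv : ∀ t, ∀ ω ∈ G, Θ.θ t ω ∈ G)
    (hGne : ∀ ω ∈ G, (N ω).Nonempty) (x : X) (a : ℝ) :
    MeasurableSet {ω | ω ∈ G ∧ infDist x (closedHull Φ N ω) < a} := by
  let S : Set (Ω × (ℝ × X)) := {p | p.1 ∈ G ∧ 0 ≤ p.2.1 ∧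
    infDist p.2.2 (N (Θ.θ (-p.2.1) p.1)) = 0 ∧
    dist x (Φ.φ p.2.1 (Θ.θ (-p.2.1) p.1) p.2.2) < a}
  have hdist : Measurable (Function.uncurry fun (y : X) (ω : Ω) => infDist y (N ω)) :=
    measurable_uncurry_of_continuous_of_measurable (fun ω => continuous_infDist_pt _) hN.2
  have hθ : Measurable fun p : Ω × (ℝ × X) => Θ.θ (-p.2.1) p.1 :=
    Θ.measurable_flow.comp
      (f := fun p : Ω × (ℝ × X) => (-p.2.1, p.1)) (by fun_prop)
  have hy : Measurable fun p : Ω × (ℝ × X) => p.2.2 := by fun_prop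
  have ht : Measurable fun p : Ω × (ℝ × X) => p.2.1 := by fun_prop
  have hS : MeasurableSet S := by
    refine (measurable_fst hG).inter (MeasurableSet.inter ?_ (MeasurableSet.inter ?_ ?_))
    · exact ht measurableSet_Ici
    · exact (hdist.comp (hy.prodMk hθ)) (measurableSet_singleton 0)
    · have := Φ.measurable_phi.comp (ht.prodMk (hθ.prodMk hy))
      exact (measurable_const.dist this) measurableSet_Iio
  convert measurableSet_image_fst μ hS using 1
  ext ω
  constructor
  · rintro ⟨hω, hlt⟩
    have hne : (closedHull Φ N ω).Nonempty := (hGne ω hω).mono (subset_closedHull Θ Φ N ω)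
    rw [closedHull, infDist_closure, infDist_lt_iff (closure_nonempty_iff.1 hne)] at hlt
    obtain ⟨z, hz, hza⟩ := hlt
    obtain ⟨t, ht0, y, hyN, rfl⟩ := (mem_pullbackTail _ _ _ _ _).1 hz
    exact ⟨(ω, t, y), ⟨hω, ht0, infDist_zero_of_mem hyN, hza⟩, rfl⟩
  · rintro ⟨⟨ω, t, y⟩, ⟨hω, ht0, hyN, hza⟩, rfl⟩
    refine ⟨hω, lt_of_le_of_lt (infDist_le_dist_of_mem (subset_closure ?_)) hza⟩
    refine (mem_pullbackTail _ _ _ _ _).2 ⟨t, ht0, y, ?_, rfl⟩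
    exact ((hN.1 _).mem_iff_infDist_zero (hGne _ (hGinv _ _ hω))).2 hyN

/-! ### The forward invariant neighbourhood -/

/-- a random attractor admits a forward invariant random closed
fundamental neighborhood. -/
theorem exists_fwdInvariant_fundamental_nbhd
    (μ : Measure Ω) [IsProbabilityMeasure μ] [μ.IsComplete] (Θ : MetricDS Ω μ)
    [CompactSpace X] [BorelSpace X] (Φ : RDS Ω X Θ.θ)
    (N A : Ω → Set X) (hN : IsRandomClosed N)
    (hA : IsRandomCompact A) (hAinv : RInvariant Φ A)
    (hsub : ∀ ω, A ω ⊆ interior (N ω))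
    (hom : ∀ ω, rOmegaLimit Φ N ω = A ω) :
    ∃ Nhat : Ω → Set X, IsRandomClosed Nhat ∧ FwdInvariant Φ Nhat ∧
      ∀ᵐ ω ∂μ, A ω ⊆ interior (Nhat ω) ∧ rOmegaLimit Φ Nhat ω = A ω := by
  classical
  let E : Set Ω := {ω | A ω = ∅ ∨ A ω = univ}
  have hE : MeasurableSet E := by
    obtain ⟨s, hsc, hsd⟩ := TopologicalSpace.exists_countable_dense X
    have hEs : E = ⋂ x ∈ s, {ω | infDist x (A ω) = 0} := by
      ext ω
      simp only [mem_iInter, mem_ofPred_eq]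
      constructor
      · rintro (h | h) x _
        · rw [h, infDist_empty]
        · rw [h]; exact infDist_zero_of_mem (mem_univ x)
      · intro h
        rcases (A ω).eq_empty_or_nonempty with h0 | h0
        · exact Or.inl h0
        have hsA : s ⊆ A ω := fun x hx =>
          ((hA.1 ω).isClosed.mem_iff_infDist_zero h0).2 (h x hx)
        refine Or.inr (eq_univ_of_univ_subset ?_)
        rw [← hsd.closure_eq]
        exact closure_minimal hsA (hA.1 ω).isClosed
    rw [hEs]
    exact MeasurableSet.biInter hsc fun x _ => hA.2 x (measurableSet_singleton 0)
  have hEinv : ∀ t, ∀ ω ∈ E, Θ.θ t ω ∈ E := by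
    rintro t ω (h | h)
    · left
      rw [← hAinv, h, image_empty]
    · right
      rw [← hAinv, h, image_univ]
      exact eq_univ_of_forall fun x => ⟨_, phi_neg_cancel Θ Φ t ω x⟩
  have hback : ∀ t ω, Θ.θ (-t) (Θ.θ t ω) = ω := fun t ω => by
    rw [← Θ.theta_add, neg_add_cancel, Θ.theta_zero]
  have hEiff : ∀ t ω, Θ.θ t ω ∈ E ↔ ω ∈ E := fun t ω =>
    ⟨fun h => by simpa [hback] using hEinv (-t) _ h, hEinv t ω⟩
  have hne : ∀ ω ∈ Eᶜ, (N ω).Nonempty := by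
    intro ω hω
    have hAne : (A ω).Nonempty := nonempty_iff_ne_empty.2 fun h => hω (Or.inl h)
    exact hAne.mono ((hsub ω).trans interior_subset)
  let M : Ω → Set X := fun ω => if ω ∈ E then A ω else closedHull Φ N ω
  have hM1 : ∀ {ω}, ω ∈ E → M ω = A ω := fun h => if_pos h
  have hM2 : ∀ {ω}, ω ∉ E → M ω = closedHull Φ N ω := fun h => if_neg h
  -- omega-limit sets only see `M` along the orbit, on which the case distinction is constant
  have hlim : ∀ ω, rOmegaLimit Φ M ω = A ω := by
    intro ω
    by_cases h : ω ∈ E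
    · have : rOmegaLimit Φ M ω = rOmegaLimit Φ A ω := by
        unfold rOmegaLimit
        simp only [hM1 ((hEiff _ ω).2 h)]
      rw [this, rOmegaLimit_of_invariant Θ Φ hAinv (hA.1 ω).isClosed]
    · have : rOmegaLimit Φ M ω = rOmegaLimit Φ (closedHull Φ N) ω := by
        unfold rOmegaLimit
        simp only [hM2 (mt (hEiff _ ω).1 h)]
      rw [this, rOmegaLimit_closedHull, hom]
  refine ⟨M, ⟨fun ω => ?_, fun x => ?_⟩, fun t ht ω => ?_,
    Eventually.of_forall fun ω => ⟨?_, hlim ω⟩⟩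
  · by_cases h : ω ∈ E
    · rw [hM1 h]; exact (hA.1 ω).isClosed
    · rw [hM2 h]; exact isClosed_closure
  · refine measurable_of_Iio fun a => ?_
    have hset : (fun ω => infDist x (M ω)) ⁻¹' Iio a = (E ∩ {ω | infDist x (A ω) < a}) ∪
        {ω | ω ∈ Eᶜ ∧ infDist x (closedHull Φ N ω) < a} := by
      ext ω
      by_cases h : ω ∈ E
      · simp [h, hM1 h]
      · simp [h, hM2 h]
    rw [hset]
    refine (hE.inter (hA.2 x measurableSet_Iio)).union ?_
    exact measurableSet_infDist_closedHull_lt μ Θ Φ hN hE.compl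
      (fun t ω h => mt (hEiff t ω).1 h) hne x a
  · by_cases h : ω ∈ E
    · rw [hM1 h, hM1 (hEinv t ω h), hAinv]
    · rw [hM2 h, hM2 (mt (hEiff t ω).1 h)]
      exact closedHull_fwdInvariant Θ Φ N t ht ω
  · by_cases h : ω ∈ E
    · rw [hM1 h]
      rcases h with h | h <;> rw [h]
      · exact empty_subset _
      · rw [interior_univ]
    · rw [hM2 h]
      exact (hsub ω).trans (interior_mono (subset_closedHull Θ Φ N ω))
end

section
/- Let φ be an RDS on a compact metric space X and let A be an attractor with forward invariant fundamental neighborhood N and basin of attraction B(A). Then for every random closed set K with K(ω) ⊆ B(A)(ω), there exists T(K,ω) ≥ 0 such that φ(t,ω)K(ω) ⊆ int N(θ_t ω) for all t ≥ T(K,ω). -/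
/-!
Since time is two-sided, each `φ(t,ω)` is a homeomorphism of `X` with inverse `φ(-t, θ_t ω)`, hence
an open map, so forward invariance of `N` passes to the interior of `N`
(`FwdInvariant.interior_of_metricDS`). Therefore the open sets `φ(t,ω)⁻¹ (int N(θ_t ω))` increase
with `t ≥ 0`. Their union is the basin, which contains the compact set `K(ω)`, so by compactness
one of them already contains `K(ω)`; by monotonicity so do all later ones.
-/

open MeasureTheory Set Filter Metric Topology

variable {Ω X : Type*} [MeasurableSpace Ω] [MeasurableSpace X] [MetricSpace X]

theorem RDS.continuous_apply {θ : ℝ → Ω → Ω} (Φ : RDS Ω X θ) (t : ℝ) (ω : Ω) :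
    Continuous (Φ.φ t ω) :=
  (Φ.continuous_phi ω).comp (by fun_prop : Continuous fun x : X => ((t, x) : ℝ × X))

theorem RDS.neg_leftInverse {μ : Measure Ω} (Θ : MetricDS Ω μ) (Φ : RDS Ω X Θ.θ)
    (t : ℝ) (ω : Ω) : Function.LeftInverse (Φ.φ (-t) (Θ.θ t ω)) (Φ.φ t ω) := fun x => by
  rw [← Φ.cocycle, neg_add_cancel, Φ.phi_zero]

theorem RDS.neg_rightInverse {μ : Measure Ω} (Θ : MetricDS Ω μ) (Φ : RDS Ω X Θ.θ)
    (t : ℝ) (ω : Ω) : Function.RightInverse (Φ.φ (-t) (Θ.θ t ω)) (Φ.φ t ω) := fun x => by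
  have h := Φ.neg_leftInverse Θ (-t) (Θ.θ t ω) x
  rwa [← Θ.theta_add, neg_neg, neg_add_cancel, Θ.theta_zero] at h

theorem RDS.isOpenMap {μ : Measure Ω} (Θ : MetricDS Ω μ) (Φ : RDS Ω X Θ.θ)
    (t : ℝ) (ω : Ω) : IsOpenMap (Φ.φ t ω) :=
  IsOpenMap.of_inverse (Φ.continuous_apply (-t) (Θ.θ t ω))
    (Φ.neg_rightInverse Θ t ω) (Φ.neg_leftInverse Θ t ω)

theorem FwdInvariant.interior_of_metricDS {μ : Measure Ω} (Θ : MetricDS Ω μ) (Φ : RDS Ω X Θ.θ)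
    {N : Ω → Set X} (hN : FwdInvariant Φ N) :
    FwdInvariant Φ fun ω => interior (N ω) := fun t ht ω =>
  interior_maximal ((image_mono interior_subset).trans (hN t ht ω))
    (Φ.isOpenMap Θ t ω _ isOpen_interior)

/-- every random closed set inside the basin of attraction enters
the interior of the fundamental neighborhood in finite time. -/
theorem entrance_time_into_fundamental_nbhd
    (μ : Measure Ω) [IsProbabilityMeasure μ] (Θ : MetricDS Ω μ)
    [CompactSpace X] [BorelSpace X] (Φ : RDS Ω X Θ.θ)
    (A N K : Ω → Set X)
    (hA : IsRandomCompact A) (hAinv : RInvariant Φ A)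
    (hN : IsFundNbhd Φ A N) (hNfwd : FwdInvariant Φ N)
    (hK : IsRandomClosed K) (hKsub : ∀ ω, K ω ⊆ attrBasin Φ N ω) :
    ∀ ω : Ω, ∃ T : ℝ, 0 ≤ T ∧
      ∀ t : ℝ, T ≤ t → Φ.φ t ω '' K ω ⊆ interior (N (Θ.θ t ω)) := by
  intro ω
  let U : Ici (0 : ℝ) → Set X := fun t => Φ.φ t ω ⁻¹' interior (N (Θ.θ t ω))
  have hmono : Monotone U := by
    intro s t hst x hx
    have hst' : (s : ℝ) ≤ t := hst
    have h := hNfwd.interior_of_metricDS Θ Φ (t - s) (sub_nonneg.2 hst') (Θ.θ s ω)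
      (mem_image_of_mem _ hx)
    rwa [← Φ.cocycle, ← Θ.theta_add, sub_add_cancel] at h
  have hcover : K ω ⊆ ⋃ t, U t := fun x hx =>
    let ⟨t, ht, hxt⟩ := hKsub ω hx
    mem_iUnion.2 ⟨⟨t, ht⟩, hxt⟩
  obtain ⟨T, hT⟩ := (hK.1 ω).isCompact.elim_directed_cover U
    (fun t => isOpen_interior.preimage (Φ.continuous_apply t ω)) hcover hmono.directed_le
  refine ⟨T, T.2, fun t ht => image_subset_iff.2 ?_⟩
  exact hT.trans (@hmono T ⟨t, le_trans T.2 ht⟩ ht)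
end

section
/- Let φ be an RDS on a compact metric space X and let A, R be two disjoint invariant random compact sets. Assume there exists L : Ω × X → [0,1] such that ω ↦ L(ω,x) is measurable for each x, x ↦ L(ω,x) is continuous for each ω, L(ω,x) = 0 for x ∈ A(ω), L(ω,x) = 1 for x ∈ R(ω), and for every x ∈ X \ (A(ω) ∪ R(ω)) and every t > 0, 1 > L(ω,x) > L(θ_t ω, φ(t,ω)x) > 0. Then (A,R) is an attractor-repeller pair of φ; in particular A is an attractor whose basin of attraction is B(A)(ω) = {x : L(ω,x) < 1} and R(ω) = X \ B(A)(ω) is the repeller corresponding to A. -/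
/-!
The conclusion is required for every `ω`, and along a non-recurrent orbit a sublevel set of `L` of
constant level need not shrink to `A` under pullback. The fundamental neighborhood is therefore
`N ω = {L ω ≤ r ω}` with a level `r ω ∈ (0, 1)` adapted to the orbit of `ω`.

Write `G t ω x = L (θ t ω) (φ t ω x)`, which is nonincreasing in `t`, and strictly decreasing for
`x` outside `A ω ∪ R ω`. Let `S ω` be the supremum of `L ω` over the points `x` whose whole orbit
satisfies `G ≤ 1/2`, and let `S' ω` be the corresponding quantity for the time-reversed function
`1 - G (-t)`. Compactness of `X` makes both measurable and attained, so along an orbit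
`g = S - S'` is either identically `0` with `S = S' = 0`, or strictly decreasing
(`LyapFlow.sup_strict`).

* In the first case `r = 1/2` works: points of the omega-limit set of `{L ≤ 1/2}` have
  `G ≤ 1/2` along their whole orbit, so they lie in `A` because `S = 0`; and a point which never
  enters `{L < 1/2}` has `G ≥ 1/2` along its whole orbit, so it lies in `R` because `S' = 0`.
* In the second case, normalising `g` by its limits at `±∞` gives a measurable clock `r`
  increasing from `0` to `1` along the orbit. As `r → 0` in the past, pullback of `{L ≤ r}` leaves
  only `{L = 0} = A`; as `r → 1` in the future, every point with `L < 1` enters `{L < r}`.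

`exists_level` produces the measurable `r`, and `measurableSet_exists_forall_le` is the
compactness argument behind all measurability claims.
-/

open MeasureTheory Set Filter Metric Topology

variable {Ω X : Type*} [MeasurableSpace Ω] [MeasurableSpace X] [MetricSpace X]

set_option linter.unusedSectionVars false

/-! ### Measurability of random sublevel sets -/

/-- Measurability of the projection of a compact, countably constrained sublevel set: by
compactness, solvability of the closed constraints is equivalent to approximate solvability in a
countable dense set, for finitely many constraints at a time. -/
lemma measurableSet_exists_forall_le [CompactSpace X] (f : ℕ → Ω → X → ℝ)
    (hm : ∀ n x, Measurable fun ω => f n ω x) (hc : ∀ n ω, Continuous (f n ω)) :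
    MeasurableSet {ω | ∃ y, ∀ n, f n ω y ≤ 0} := by
  obtain ⟨D, hDc, hDd⟩ := TopologicalSpace.exists_countable_dense X
  have key : {ω | ∃ y, ∀ n, f n ω y ≤ 0} =
      ⋂ k : ℕ, ⋃ y ∈ D, ⋂ n ∈ Finset.range (k + 1), {ω | f n ω y < 1 / ((k : ℝ) + 1)} := by
    ext ω
    simp only [mem_ofPred_eq, mem_iInter, mem_iUnion, exists_prop]
    constructor
    · rintro ⟨y, hy⟩ k
      have hopen : IsOpen (⋂ n ∈ Finset.range (k + 1), {z | f n ω z < 1 / ((k : ℝ) + 1)}) :=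
        isOpen_biInter_finset fun n _ => isOpen_lt (hc n ω) continuous_const
      have hy' : y ∈ ⋂ n ∈ Finset.range (k + 1), {z | f n ω z < 1 / ((k : ℝ) + 1)} := by
        simp only [mem_iInter, mem_ofPred_eq]
        intro n _
        exact (hy n).trans_lt (by positivity)
      obtain ⟨z, hz, hzD⟩ := hDd.inter_open_nonempty _ hopen ⟨y, hy'⟩
      simp only [mem_iInter, mem_ofPred_eq] at hz
      exact ⟨z, hzD, hz⟩
    · intro h
      choose z _ hz using h
      obtain ⟨y, -, ψ, hψ, hlim⟩ := isCompact_univ.tendsto_subseq (x := z) fun _ => mem_univ _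
      refine ⟨y, fun n => ?_⟩
      have h1 : Tendsto (fun k => f n ω (z (ψ k))) atTop (𝓝 (f n ω y)) :=
        ((hc n ω).tendsto y).comp hlim
      have h2 : Tendsto (fun k => 1 / ((ψ k : ℝ) + 1)) atTop (𝓝 0) :=
        tendsto_one_div_add_atTop_nhds_zero_nat.comp hψ.tendsto_atTop
      refine le_of_tendsto_of_tendsto h1 h2 ?_
      filter_upwards [eventually_ge_atTop n] with k hk
      exact (hz (ψ k) n (Finset.mem_range.2 (by have := hψ.id_le k; simp at this; omega))).le
  rw [key]
  refine MeasurableSet.iInter fun k => MeasurableSet.biUnion hDc fun y _ =>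
    Finset.measurableSet_biInter _ fun n _ => measurableSet_lt (hm n y) measurable_const

/-- A random sublevel set is a random closed set. The junk value `infDist x ∅ = 0` is covered by
the measurable event that the sublevel set is empty. -/
lemma isRandomClosed_sublevel [CompactSpace X] (L : Ω → X → ℝ) (r : Ω → ℝ)
    (hLmeas : ∀ x : X, Measurable fun ω => L ω x) (hLcont : ∀ ω, Continuous (L ω))
    (hr : Measurable r) : IsRandomClosed fun ω => {y | L ω y ≤ r ω} := by
  refine ⟨fun ω => isClosed_le (hLcont ω) continuous_const, fun x => ?_⟩
  refine measurable_of_Iic fun d => ?_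
  have hne : ∀ e : ℝ, MeasurableSet {ω | ∃ y, L ω y ≤ r ω ∧ dist x y ≤ e} := by
    intro e
    have := measurableSet_exists_forall_le (X := X)
      (fun n ω y => if n = 0 then L ω y - r ω else dist x y - e) ?_ ?_
    · convert this using 1
      ext ω
      simp only [mem_ofPred_eq]
      refine exists_congr fun y => ?_
      constructor
      · rintro ⟨h1, h2⟩ n
        split_ifs <;> linarith
      · intro h
        have h0 := h 0
        have h1 := h 1
        simp at h0 h1
        exact ⟨h0, h1⟩
    · intro n y
      rcases n with _ | n
      · simp only [↓reduceIte]
        exact (hLmeas y).sub hr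
      · simp
    · intro n ω
      rcases n with _ | n
      · simp only [↓reduceIte]
        exact (hLcont ω).sub continuous_const
      · simpa using (by fun_prop : Continuous fun y => dist x y - e)
  have hemp : MeasurableSet {ω | ∃ y, L ω y ≤ r ω} := by
    convert hne (diam (univ : Set X)) using 1
    ext ω
    simp only [mem_ofPred_eq]
    refine exists_congr fun y => ?_
    exact ⟨fun h => ⟨h, dist_le_diam_of_mem isCompact_univ.isBounded trivial trivial⟩,
      fun h => h.1⟩
  by_cases hd : d < 0
  · convert MeasurableSet.empty
    ext ω
    simp only [mem_preimage, mem_Iic, mem_empty_iff_false, iff_false, not_le]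
    exact hd.trans_le infDist_nonneg
  · convert hemp.compl.union (hne d) using 1
    ext ω
    simp only [mem_preimage, mem_Iic, mem_union, mem_compl_iff, mem_ofPred_eq]
    by_cases h : ∃ y, L ω y ≤ r ω
    · have hcl : IsClosed {y | L ω y ≤ r ω} := isClosed_le (hLcont ω) continuous_const
      constructor
      · intro h1
        obtain ⟨y, hy, hy'⟩ := hcl.isCompact.exists_infDist_eq_dist h x
        exact Or.inr ⟨y, hy, hy' ▸ h1⟩
      · rintro (h1 | ⟨y, hy, hy'⟩)
        · exact absurd h h1
        · exact (infDist_le_dist_of_mem (s := {y | L ω y ≤ r ω}) hy).trans hy'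
    · have : {y | L ω y ≤ r ω} = ∅ := by
        ext y
        simpa using not_exists.1 h y
      simp only [this, infDist_empty]
      exact ⟨fun _ => Or.inl h, fun _ => not_lt.1 hd⟩

/-! ### Lyapunov functions along orbits -/

/-- `G t ω x` is the value at time `t` of a Lyapunov function along the orbit of `(ω, x)` under
the skew product of `θ` and `φ`. The axioms are stable under time reversal
`G ↦ 1 - G (-t)`, see `LyapFlow.reverse`. -/
structure LyapFlow (θ : ℝ → Ω → Ω) (φ : ℝ → Ω → X → X) (G : ℝ → Ω → X → ℝ) : Prop where
  nonneg : ∀ t ω x, 0 ≤ G t ω x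
  le_one : ∀ t ω x, G t ω x ≤ 1
  cont : ∀ t ω, Continuous (G t ω)
  meas : ∀ t x, Measurable fun ω => G t ω x
  anti : ∀ ω x, Antitone fun t => G t ω x
  strict : ∀ s t ω x, s < t → 0 < G s ω x → G s ω x < 1 → G t ω x < G s ω x
  pos : ∀ s t ω x, 0 < G s ω x → 0 < G t ω x
  lt_one : ∀ s t ω x, G s ω x < 1 → G t ω x < 1
  coc : ∀ t s ω x, G t (θ s ω) (φ s ω x) = G (t + s) ω x
  surj : ∀ s ω, Function.Surjective (φ s ω)

/-- The supremum of `G 0 ω` over the points whose entire orbit has level at most `1/2`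
(`0` if there are none). -/
noncomputable def lowSup (G : ℝ → Ω → X → ℝ) (ω : Ω) : ℝ :=
  sSup (G 0 ω '' {x | ∀ s, G s ω x ≤ 1 / 2})

namespace LyapFlow

variable {θ : ℝ → Ω → Ω} {φ : ℝ → Ω → X → X} {G : ℝ → Ω → X → ℝ}

lemma reverse (h : LyapFlow θ φ G) :
    LyapFlow (fun t => θ (-t)) (fun t => φ (-t)) (fun t ω x => 1 - G (-t) ω x) where
  nonneg t ω x := by linarith [h.le_one (-t) ω x]
  le_one t ω x := by linarith [h.nonneg (-t) ω x]
  cont t ω := continuous_const.sub (h.cont (-t) ω)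
  meas t x := measurable_const.sub (h.meas (-t) x)
  anti ω x s t hst := by
    have := h.anti ω x (neg_le_neg hst)
    simp only at this ⊢
    linarith
  strict s t ω x hst h0 h1 := by
    have := h.strict (-t) (-s) ω x (neg_lt_neg hst) (h.pos (-s) _ _ _ (by linarith))
      (h.lt_one (-s) _ _ _ (by linarith))
    linarith
  pos s t ω x h0 := by linarith [h.lt_one (-s) (-t) ω x (by linarith)]
  lt_one s t ω x h0 := by linarith [h.pos (-s) (-t) ω x (by linarith)]
  coc t s ω x := by simp only [h.coc, neg_add]
  surj s ω := h.surj (-s) ω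

lemma lowSup_theta (h : LyapFlow θ φ G) (t : ℝ) (ω : Ω) :
    lowSup G (θ t ω) = sSup (G t ω '' {x | ∀ s, G s ω x ≤ 1 / 2}) := by
  unfold lowSup
  congr 1
  ext a
  constructor
  · rintro ⟨y, hy, rfl⟩
    obtain ⟨x, rfl⟩ := h.surj t ω y
    refine ⟨x, fun s => ?_, by rw [h.coc, zero_add]⟩
    have := hy (s - t)
    rwa [h.coc, sub_add_cancel] at this
  · rintro ⟨x, hx, rfl⟩
    refine ⟨φ t ω x, fun s => ?_, by rw [h.coc, zero_add]⟩
    rw [h.coc]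
    exact hx _

lemma bddAbove (h : LyapFlow θ φ G) (t : ℝ) (ω : Ω) (K : Set X) : BddAbove (G t ω '' K) :=
  ⟨1, by rintro _ ⟨x, -, rfl⟩; exact h.le_one t ω x⟩

lemma lowSup_nonneg (h : LyapFlow θ φ G) (ω : Ω) : 0 ≤ lowSup G ω :=
  Real.sSup_nonneg (by rintro _ ⟨x, -, rfl⟩; exact h.nonneg 0 ω x)

lemma lowSup_le_one (h : LyapFlow θ φ G) (ω : Ω) : lowSup G ω ≤ 1 :=
  Real.sSup_le (by rintro _ ⟨x, -, rfl⟩; exact h.le_one 0 ω x) zero_le_one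

/-- The supremum defining `lowSup` is attained as soon as it is positive. -/
lemma exists_eq_lowSup [CompactSpace X] (h : LyapFlow θ φ G) (t : ℝ) (ω : Ω)
    (hpos : 0 < lowSup G (θ t ω)) :
    ∃ x, (∀ s, G s ω x ≤ 1 / 2) ∧ G t ω x = lowSup G (θ t ω) := by
  rw [h.lowSup_theta] at hpos ⊢
  have hne : {x | ∀ s, G s ω x ≤ 1 / 2}.Nonempty := by
    by_contra hcon
    rw [not_nonempty_iff_eq_empty.1 hcon, image_empty, Real.sSup_empty] at hpos
    exact lt_irrefl _ hpos
  have hcl : IsClosed {x | ∀ s, G s ω x ≤ 1 / 2} := by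
    rw [ofPred_forall]
    exact isClosed_iInter fun s => isClosed_le (h.cont s ω) continuous_const
  obtain ⟨x, hx, hx'⟩ := (hcl.isCompact.image (h.cont t ω)).sSup_mem (hne.image _)
  exact ⟨x, hx, hx'⟩

lemma le_lowSup (h : LyapFlow θ φ G) (t : ℝ) (ω : Ω) (x : X) (hx : ∀ s, G s ω x ≤ 1 / 2) :
    G t ω x ≤ lowSup G (θ t ω) := by
  rw [h.lowSup_theta]
  exact le_csSup (h.bddAbove t ω _) ⟨x, hx, rfl⟩

lemma sup_pos [CompactSpace X] (h : LyapFlow θ φ G) (s t : ℝ) (ω : Ω)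
    (hpos : 0 < lowSup G (θ s ω)) : 0 < lowSup G (θ t ω) := by
  obtain ⟨x, hx, hx'⟩ := h.exists_eq_lowSup s ω hpos
  exact (h.pos s t ω x (hx' ▸ hpos)).trans_le (h.le_lowSup t ω x hx)

/-- Because the supremum is attained, `lowSup` inherits the strict decrease of `G`. -/
lemma sup_strict [CompactSpace X] (h : LyapFlow θ φ G) (s t : ℝ) (ω : Ω) (hst : s < t)
    (hpos : 0 < lowSup G (θ t ω)) : lowSup G (θ t ω) < lowSup G (θ s ω) := by
  obtain ⟨x, hx, hx'⟩ := h.exists_eq_lowSup t ω hpos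
  rw [← hx']
  refine lt_of_lt_of_le ?_ (h.le_lowSup s ω x hx)
  exact h.strict s t ω x hst (h.pos t s ω x (hx' ▸ hpos)) (by linarith [hx s])

lemma sup_anti [CompactSpace X] (h : LyapFlow θ φ G) (ω : Ω) :
    Antitone fun t => lowSup G (θ t ω) := by
  intro s t hst
  rcases hst.eq_or_lt with rfl | hst
  · exact le_rfl
  · rcases (h.lowSup_nonneg (θ t ω)).eq_or_lt with h0 | h0
    · simp only [← h0]
      exact h.lowSup_nonneg _
    · exact (h.sup_strict s t ω hst h0).le

lemma measurable_lowSup [CompactSpace X] (h : LyapFlow θ φ G) (hθ : ∀ ω, θ 0 ω = ω) :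
    Measurable (lowSup G) := by
  refine measurable_of_Ici fun a => ?_
  by_cases ha : a ≤ 0
  · convert MeasurableSet.univ
    ext ω
    simpa using ha.trans (h.lowSup_nonneg ω)
  · push Not at ha
    have := measurableSet_exists_forall_le (X := X)
      (fun n ω y => if n = 0 then a - G 0 ω y else G (-(n : ℝ)) ω y - 1 / 2) ?_ ?_
    · convert this using 1
      ext ω
      simp only [mem_preimage, mem_Ici, mem_ofPred_eq]
      constructor
      · intro hle
        have hp : 0 < lowSup G (θ 0 ω) := by
          rw [hθ]
          exact ha.trans_le hle
        obtain ⟨x, hx, hx'⟩ := h.exists_eq_lowSup 0 ω hp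
        rw [hθ] at hx'
        refine ⟨x, fun n => ?_⟩
        split_ifs
        · linarith
        · linarith [hx (-(n : ℝ))]
      · rintro ⟨y, hy⟩
        have h0 := hy 0
        simp only [↓reduceIte] at h0
        have hy' : ∀ s, G s ω y ≤ 1 / 2 := by
          intro s
          obtain ⟨n, hn⟩ := exists_nat_gt (-s)
          have h1 := hy (n + 1)
          simp only [Nat.add_eq_zero_iff, one_ne_zero, and_false, ↓reduceIte, Nat.cast_add,
            Nat.cast_one] at h1
          have h2 := h.anti ω y (show -((n : ℝ) + 1) ≤ s by linarith)
          simp only at h2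
          linarith
        have h1 := h.le_lowSup 0 ω y hy'
        rw [hθ] at h1
        linarith
    · intro n y
      split_ifs
      · exact measurable_const.sub (h.meas 0 y)
      · exact (h.meas _ y).sub measurable_const
    · intro n ω
      split_ifs
      · exact continuous_const.sub (h.cont 0 ω)
      · exact (h.cont _ ω).sub continuous_const

end LyapFlow

/-! ### The level function -/

/-- A bounded measurable function that along each orbit is either identically `0` or strictly
decreasing can be normalised to a measurable clock: the limits at `±∞` are measurable and constant on orbits. -/
lemma exists_clock (θ : ℝ → Ω → Ω) (hθm : ∀ t, Measurable (θ t))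
    (hθ : ∀ t s ω, θ (t + s) ω = θ t (θ s ω)) (hθ0 : ∀ ω, θ 0 ω = ω) (g : Ω → ℝ)
    (hg : Measurable g) (hb : ∀ ω, |g ω| ≤ 1)
    (hdich : ∀ ω, (∀ t, g (θ t ω) = 0) ∨ StrictAnti fun t => g (θ t ω)) :
    ∃ r : Ω → ℝ, Measurable r ∧ (∀ ω, 0 < r ω ∧ r ω < 1) ∧
      ∀ ω, ((∀ t, g (θ t ω) = 0) ∧ ∀ t, r (θ t ω) = 1 / 2) ∨
        (Tendsto (fun t => r (θ t ω)) atBot (𝓝 0) ∧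
          Tendsto (fun t => r (θ t ω)) atTop (𝓝 1)) := by
  have hanti : ∀ ω, Antitone fun t => g (θ t ω) := fun ω => (hdich ω).elim
    (fun h s t _ => by simp [h]) fun h => h.antitone
  set a : Ω → ℝ := fun ω => ⨆ n : ℕ, g (θ (-(n : ℝ)) ω) with ha
  set b : Ω → ℝ := fun ω => ⨅ n : ℕ, g (θ (n : ℝ) ω) with hbdef
  have ham : Measurable a := Measurable.iSup fun n => hg.comp (hθm _)
  have hbm : Measurable b := Measurable.iInf fun n => hg.comp (hθm _)
  have hbA : ∀ ω, BddAbove (range fun t => g (θ t ω)) := fun ω =>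
    ⟨1, by rintro _ ⟨t, rfl⟩; exact (abs_le.1 (hb _)).2⟩
  have hbB : ∀ ω, BddBelow (range fun t => g (θ t ω)) := fun ω =>
    ⟨-1, by rintro _ ⟨t, rfl⟩; exact (abs_le.1 (hb _)).1⟩
  have hneg : Tendsto (fun n : ℕ => -(n : ℝ)) atTop atBot :=
    tendsto_neg_atTop_atBot.comp tendsto_natCast_atTop_atTop
  have hlimA : ∀ ω, Tendsto (fun t => g (θ t ω)) atBot (𝓝 (a ω)) := by
    intro ω
    have h1 := tendsto_atBot_ciSup (hanti ω) (hbA ω)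
    have h2 : Tendsto (fun n : ℕ => g (θ (-(n : ℝ)) ω)) atTop (𝓝 (a ω)) := by
      refine tendsto_atTop_ciSup (fun m n hmn => hanti ω ?_) ?_
      · exact neg_le_neg (Nat.cast_le.2 hmn)
      · exact (hbA ω).mono (by rintro _ ⟨n, rfl⟩; exact ⟨_, rfl⟩)
    rwa [tendsto_nhds_unique h2 (h1.comp hneg)]
  have hlimB : ∀ ω, Tendsto (fun t => g (θ t ω)) atTop (𝓝 (b ω)) := by
    intro ω
    have h1 := tendsto_atTop_ciInf (hanti ω) (hbB ω)
    have h2 : Tendsto (fun n : ℕ => g (θ (n : ℝ) ω)) atTop (𝓝 (b ω)) := by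
      refine tendsto_atTop_ciInf (fun m n hmn => hanti ω ?_) ?_
      · exact Nat.cast_le.2 hmn
      · exact (hbB ω).mono (by rintro _ ⟨n, rfl⟩; exact ⟨_, rfl⟩)
    rwa [tendsto_nhds_unique h2 (h1.comp tendsto_natCast_atTop_atTop)]
  have hainv : ∀ s ω, a (θ s ω) = a ω := by
    intro s ω
    refine tendsto_nhds_unique (hlimA (θ s ω)) ?_
    simp only [← hθ]
    exact (hlimA ω).comp (tendsto_atBot_add_const_right _ s tendsto_id)
  have hbinv : ∀ s ω, b (θ s ω) = b ω := by
    intro s ω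
    refine tendsto_nhds_unique (hlimB (θ s ω)) ?_
    simp only [← hθ]
    exact (hlimB ω).comp (tendsto_atTop_add_const_right _ s tendsto_id)
  have hzero : ∀ ω, (∀ t, g (θ t ω) = 0) → a ω = b ω := by
    intro ω h
    simp [ha, hbdef, h]
  have hstr : ∀ ω, (StrictAnti fun t => g (θ t ω)) → b ω < g ω ∧ g ω < a ω := by
    intro ω h
    have h1 : b ω ≤ g (θ 1 ω) := (hanti ω).le_of_tendsto (hlimB ω) 1
    have h2 : g (θ (-1) ω) ≤ a ω := (hanti ω).ge_of_tendsto (hlimA ω) (-1)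
    have h3 := h (show (0:ℝ) < 1 by norm_num)
    have h4 := h (show (-1:ℝ) < 0 by norm_num)
    simp only [hθ0] at h3 h4
    exact ⟨h1.trans_lt h3, h4.trans_le h2⟩
  refine ⟨fun ω => if a ω = b ω then 1 / 2 else (a ω - g ω) / (a ω - b ω), ?_, ?_, ?_⟩
  · exact Measurable.ite (measurableSet_eq_fun ham hbm) measurable_const
      ((ham.sub hg).div (ham.sub hbm))
  · intro ω
    rcases hdich ω with h | h
    · simp only [hzero ω h, ↓reduceIte]
      norm_num
    · obtain ⟨h1, h2⟩ := hstr ω h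
      have hne : a ω ≠ b ω := (h1.trans h2).ne'
      simp only [hne, ↓reduceIte]
      exact ⟨div_pos (by linarith) (by linarith), (div_lt_one (by linarith)).2 (by linarith)⟩
  · intro ω
    rcases hdich ω with h | h
    · left
      refine ⟨h, fun t => ?_⟩
      simp only [hainv, hbinv, hzero ω h, ↓reduceIte]
    · right
      obtain ⟨h1, h2⟩ := hstr ω h
      have hne : a ω ≠ b ω := (h1.trans h2).ne'
      simp only [hainv, hbinv, hne, ↓reduceIte]
      constructor
      · have := ((hlimA ω).const_sub (a ω)).div_const (a ω - b ω)
        simpa using this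
      · have := ((hlimB ω).const_sub (a ω)).div_const (a ω - b ω)
        rwa [div_self (sub_ne_zero.2 hne)] at this

/-- The level function `r`: along each orbit it is either constantly `1/2`, and then orbits staying
in `{L ≤ 1/2}` (resp. `{L ≥ 1/2}`) for all time have `L = 0` (resp. `L = 1`), or it runs from `0`
at `-∞` to `1` at `+∞`. -/
lemma exists_level [CompactSpace X] {θ : ℝ → Ω → Ω} {φ : ℝ → Ω → X → X} {G : ℝ → Ω → X → ℝ}
    (h : LyapFlow θ φ G) (hθm : ∀ t, Measurable (θ t))
    (hθ : ∀ t s ω, θ (t + s) ω = θ t (θ s ω)) (hθ0 : ∀ ω, θ 0 ω = ω) :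
    ∃ r : Ω → ℝ, Measurable r ∧ (∀ ω, 0 < r ω ∧ r ω < 1) ∧
      ∀ ω, ((∀ t, r (θ t ω) = 1 / 2) ∧ (∀ x, (∀ s, G s ω x ≤ 1 / 2) → G 0 ω x = 0) ∧
          ∀ x, (∀ s, 1 / 2 ≤ G s ω x) → G 0 ω x = 1) ∨
        (Tendsto (fun t => r (θ t ω)) atBot (𝓝 0) ∧
          Tendsto (fun t => r (θ t ω)) atTop (𝓝 1)) := by
  have h' := h.reverse
  set G' : ℝ → Ω → X → ℝ := fun t ω x => 1 - G (-t) ω x with hG'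
  have hA' : ∀ ω, Monotone fun t => lowSup G' (θ t ω) := by
    intro ω s t hst
    have := h'.sup_anti ω (neg_le_neg hst)
    simpa using this
  have hdich : ∀ ω, (∀ t, lowSup G (θ t ω) = 0 ∧ lowSup G' (θ t ω) = 0) ∨
      StrictAnti fun t => lowSup G (θ t ω) - lowSup G' (θ t ω) := by
    intro ω
    by_cases h1 : ∃ t, 0 < lowSup G (θ t ω)
    · obtain ⟨u, hu⟩ := h1
      right
      intro s t hst
      have e1 := h.sup_strict s t ω hst (h.sup_pos u t ω hu)
      have e2 := hA' ω hst.le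
      simp only at e2 ⊢
      linarith
    by_cases h2 : ∃ t, 0 < lowSup G' (θ t ω)
    · obtain ⟨u, hu⟩ := h2
      right
      intro s t hst
      have hp := h'.sup_pos (-u) (-s) ω (by simpa using hu)
      have e1 := h'.sup_strict (-t) (-s) ω (neg_lt_neg hst) hp
      have e2 := h.sup_anti ω hst.le
      simp only [neg_neg] at e1 e2 ⊢
      linarith
    · push Not at h1 h2
      exact Or.inl fun t => ⟨(h1 t).antisymm (h.lowSup_nonneg _),
        (h2 t).antisymm (h'.lowSup_nonneg _)⟩
  obtain ⟨r, hrm, hr01, hr⟩ := exists_clock θ hθm hθ hθ0 (fun ω => lowSup G ω - lowSup G' ω)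
    ((h.measurable_lowSup hθ0).sub (h'.measurable_lowSup (by simpa using hθ0)))
    (fun ω => abs_le.2 ⟨by linarith [h.lowSup_nonneg ω, h'.lowSup_le_one ω],
      by linarith [h'.lowSup_nonneg ω, h.lowSup_le_one ω]⟩)
    (fun ω => (hdich ω).imp (fun h0 t => by simp [h0 t]) id)
  refine ⟨r, hrm, hr01, fun ω => (hr ω).imp (fun hgood => ?_) id⟩
  obtain ⟨hz, hhalf⟩ := hgood
  have hSS : lowSup G (θ 0 ω) = 0 ∧ lowSup G' (θ 0 ω) = 0 := by
    rcases hdich ω with h0 | h0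
    · exact h0 0
    · have := h0 (show (0:ℝ) < 1 by norm_num)
      simp only at this hz
      rw [hz, hz] at this
      exact absurd this (lt_irrefl _)
  refine ⟨hhalf, fun x hx => ?_, fun x hx => ?_⟩
  · have := h.le_lowSup 0 ω x hx
    rw [hSS.1] at this
    exact this.antisymm (h.nonneg 0 ω x)
  · have := h'.le_lowSup 0 ω x fun s => by
      simp only [hG']
      linarith [hx (-s)]
    simp only [hG', neg_zero] at this
    rw [hSS.2] at this
    linarith [h.le_one 0 ω x]

/-! ### The attractor-repeller pair -/

/-- two disjoint invariant random compact sets admitting a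
continuous Lyapunov function form an attractor-repeller pair, with basin of
attraction `{x : L(ω,x) < 1}`. -/
theorem attractorRepellerPair_of_lyapunov
    (μ : Measure Ω) [IsProbabilityMeasure μ] (Θ : MetricDS Ω μ)
    (hErg : ∀ s : Set Ω, MeasurableSet s → (∀ t : ℝ, Θ.θ t ⁻¹' s = s) →
      μ s = 0 ∨ μ s = 1)
    [CompactSpace X] [BorelSpace X] (Φ : RDS Ω X Θ.θ)
    (A R : Ω → Set X)
    (hA : IsRandomCompact A) (hAinv : RInvariant Φ A)
    (hR : IsRandomCompact R) (hRinv : RInvariant Φ R)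
    (hdisj : ∀ ω, Disjoint (A ω) (R ω))
    (L : Ω → X → ℝ)
    (hLmeas : ∀ x : X, Measurable fun ω => L ω x)
    (hLcont : ∀ ω : Ω, Continuous fun x => L ω x)
    (hLrange : ∀ ω x, L ω x ∈ Icc (0:ℝ) 1)
    (hLA : ∀ ω, ∀ x ∈ A ω, L ω x = 0)
    (hLR : ∀ ω, ∀ x ∈ R ω, L ω x = 1)
    (hLdec : ∀ ω : Ω, ∀ x ∈ (A ω ∪ R ω)ᶜ, ∀ t : ℝ, 0 < t →
      L ω x < 1 ∧ L (Θ.θ t ω) (Φ.φ t ω x) < L ω x ∧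
        0 < L (Θ.θ t ω) (Φ.φ t ω x)) :
    IsAttractorRepellerPair Φ A R ∧
      ∃ N : Ω → Set X, IsFundNbhd Φ A N ∧
        (∀ ω, attrBasin Φ N ω = {x | L ω x < 1}) ∧
        ∀ ω, R ω = {x | L ω x < 1}ᶜ := by
  have hθ0 := Θ.theta_zero
  have hθ := Θ.theta_add
  have hθneg : ∀ t ω, Θ.θ t (Θ.θ (-t) ω) = ω := fun t ω => by rw [← hθ, add_neg_cancel, hθ0]
  have hθneg' : ∀ t ω, Θ.θ (-t) (Θ.θ t ω) = ω := fun t ω => by rw [← hθ, neg_add_cancel, hθ0]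
  have hφinv : ∀ t ω x, Φ.φ (-t) (Θ.θ t ω) (Φ.φ t ω x) = x := fun t ω x => by
    rw [← Φ.cocycle, neg_add_cancel, Φ.phi_zero]
  have hφinv' : ∀ t ω x, Φ.φ t ω (Φ.φ (-t) (Θ.θ t ω) x) = x := fun t ω x => by
    have := Φ.cocycle t (-t) (Θ.θ t ω) x
    rw [hθneg', add_neg_cancel, Φ.phi_zero] at this
    exact this.symm
  have hmem : ∀ D, RInvariant Φ D → ∀ t ω x, Φ.φ t ω x ∈ D (Θ.θ t ω) ↔ x ∈ D ω := by
    intro D hD t ω x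
    rw [← hD t ω]
    exact (Function.LeftInverse.injective (hφinv t ω)).mem_set_image
  -- `A` and `R` are exactly the level sets `0` and `1` of `L`.
  have hL0 : ∀ ω x, L ω x = 0 ↔ x ∈ A ω := by
    refine fun ω x => ⟨fun h0 => ?_, hLA ω x⟩
    by_contra hx
    by_cases hx' : x ∈ R ω
    · linarith [hLR ω x hx']
    · linarith [hLdec ω x (by simp [hx, hx']) 1 one_pos]
  have hL1 : ∀ ω x, L ω x = 1 ↔ x ∈ R ω := by
    refine fun ω x => ⟨fun h0 => ?_, hLR ω x⟩
    by_contra hx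
    by_cases hx' : x ∈ A ω
    · linarith [hLA ω x hx']
    · linarith [hLdec ω x (by simp [hx, hx']) 1 one_pos]
  set G : ℝ → Ω → X → ℝ := fun t ω x => L (Θ.θ t ω) (Φ.φ t ω x) with hG
  have hG0 : ∀ ω x, G 0 ω x = L ω x := fun ω x => by simp only [hG, hθ0, Φ.phi_zero]
  have hGz : ∀ t ω x, G t ω x = 0 ↔ x ∈ A ω := fun t ω x => by
    rw [← hmem A hAinv t ω x, ← hL0]
  have hGo : ∀ t ω x, G t ω x = 1 ↔ x ∈ R ω := fun t ω x => by
    rw [← hmem R hRinv t ω x, ← hL1]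
  have hGnn : ∀ t ω x, 0 ≤ G t ω x := fun t ω x => (hLrange _ _).1
  have hGle : ∀ t ω x, G t ω x ≤ 1 := fun t ω x => (hLrange _ _).2
  have hcoc : ∀ t s ω x, G t (Θ.θ s ω) (Φ.φ s ω x) = G (t + s) ω x := fun t s ω x => by
    simp only [hG, hθ, Φ.cocycle]
  have hstrict : ∀ s t ω x, s < t → 0 < G s ω x → G s ω x < 1 → G t ω x < G s ω x := by
    intro s t ω x hst h0 h1
    have hA' : Φ.φ s ω x ∉ A (Θ.θ s ω) := fun hc => h0.ne' ((hL0 _ _).2 hc)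
    have hR' : Φ.φ s ω x ∉ R (Θ.θ s ω) := fun hc => h1.ne ((hL1 _ _).2 hc)
    have := (hLdec (Θ.θ s ω) (Φ.φ s ω x) (by simp [hA', hR']) (t - s) (sub_pos.2 hst)).2.1
    rwa [← hθ, ← Φ.cocycle, sub_add_cancel] at this
  have hθm : ∀ t, Measurable (Θ.θ t) := fun t =>
    Θ.measurable_flow.comp (measurable_const.prodMk measurable_id)
  have hLjoint : Measurable (Function.uncurry fun x ω => L ω x) :=
    measurable_uncurry_of_continuous_of_measurable (u := fun x ω => L ω x) hLcont hLmeas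
  have hF : LyapFlow Θ.θ Φ.φ G := by
    refine ⟨hGnn, hGle, fun t ω => ?_, fun t x => ?_, fun ω x s t hst => ?_, hstrict, ?_, ?_, hcoc,
      fun s ω y => ⟨_, hφinv' s ω y⟩⟩
    · exact (hLcont _).comp ((Φ.continuous_phi ω).comp (Continuous.prodMk_right t))
    · exact hLjoint.comp ((Φ.measurable_phi.comp
        (measurable_const.prodMk (measurable_id.prodMk measurable_const))).prodMk (hθm t))
    · simp only
      rcases hst.eq_or_lt with rfl | hst
      · exact le_rfl
      rcases (hGnn s ω x).eq_or_lt with h0 | h0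
      · rw [← h0, (hGz t ω x).2 ((hGz s ω x).1 h0.symm)]
      rcases (hGle s ω x).eq_or_lt with h1 | h1
      · rw [h1]
        exact hGle t ω x
      · exact (hstrict s t ω x hst h0 h1).le
    · intro s t ω x h0
      refine (hGnn t ω x).lt_of_ne fun hc => h0.ne' ?_
      exact (hGz s ω x).2 ((hGz t ω x).1 hc.symm)
    · intro s t ω x h0
      refine (hGle t ω x).lt_of_ne fun hc => h0.ne ?_
      exact (hGo s ω x).2 ((hGo t ω x).1 hc)
  obtain ⟨r, hrm, hr01, hr⟩ := exists_level hF hθm hθ hθ0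
  set N : Ω → Set X := fun ω => {y | L ω y ≤ r ω} with hN
  have hint : ∀ ω, {y | L ω y < r ω} ⊆ interior (N ω) := fun ω =>
    interior_maximal (fun y (hy : L ω y < r ω) => hy.le) (isOpen_lt (hLcont ω) continuous_const)
  have hAN : ∀ ω, A ω ⊆ interior (N ω) := fun ω x hx => hint ω (by
    rw [mem_ofPred_eq, hLA ω x hx]
    exact (hr01 ω).1)
  -- A bound on `r` in the past of `ω` bounds `G` on the omega-limit set.
  have hlim : ∀ ω y, y ∈ rOmegaLimit Φ N ω → ∀ (s T c : ℝ),
      (∀ t, T ≤ t → r (Θ.θ (-t) ω) ≤ c) → G s ω y ≤ c := by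
    intro ω y hy s T c hT
    simp only [rOmegaLimit, mem_iInter] at hy
    have hy' := hy (max 0 (max T (-s))) (mem_Ici.2 (le_max_left _ _))
    refine closure_minimal ?_ (isClosed_le (hF.cont s ω) continuous_const) hy'
    intro z hz
    simp only [mem_iUnion, mem_Ici, max_le_iff] at hz
    obtain ⟨t, ⟨-, htT, hts⟩, x, hx, rfl⟩ := hz
    have e1 := hcoc s t (Θ.θ (-t) ω) x
    rw [hθneg] at e1
    have e2 := hF.anti (Θ.θ (-t) ω) x (show 0 ≤ s + t by linarith)
    simp only [hG0] at e2
    have e3 : L (Θ.θ (-t) ω) x ≤ r (Θ.θ (-t) ω) := hx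
    rw [mem_ofPred_eq, e1]
    exact e2.trans (e3.trans (hT t htT))
  have hFund : IsFundNbhd Φ A N := by
    refine ⟨isRandomClosed_sublevel L r hLmeas hLcont hrm, hAN, fun ω => Subset.antisymm ?_ ?_⟩
    · intro y hy
      rw [← hL0, ← hG0]
      rcases hr ω with ⟨h1, h2, -⟩ | ⟨h1, -⟩
      · exact h2 y fun s => hlim ω y hy s 0 _ fun t _ => (h1 (-t)).le
      · refine le_antisymm (le_of_forall_pos_le_add fun ε hε => ?_) (hGnn 0 ω y)
        rw [zero_add]
        obtain ⟨u, hu⟩ := eventually_atBot.1 (h1.eventually (eventually_le_nhds hε))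
        exact hlim ω y hy 0 (-u) ε fun t ht => hu (-t) (by linarith)
    · intro y hy
      simp only [rOmegaLimit, mem_iInter]
      intro T _
      refine subset_closure ?_
      simp only [mem_iUnion, mem_Ici]
      have himg := hAinv T (Θ.θ (-T) ω)
      rw [hθneg] at himg
      exact ⟨T, le_rfl, image_mono ((hAN _).trans interior_subset) (himg ▸ hy)⟩
  have hbasin : ∀ ω, attrBasin Φ N ω = {x | L ω x < 1} := by
    intro ω
    ext x
    simp only [attrBasin, mem_ofPred_eq]
    constructor
    · rintro ⟨t, -, ht⟩
      have h1 : G t ω x ≤ r (Θ.θ t ω) := (interior_subset ht : Φ.φ t ω x ∈ N (Θ.θ t ω))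
      rw [← hG0]
      exact hF.lt_one t 0 ω x (h1.trans_lt (hr01 _).2)
    · intro hx
      rcases hr ω with ⟨h1, -, h3⟩ | ⟨-, h2⟩
      · by_contra! hcon
        have hge : ∀ t, 0 ≤ t → 1 / 2 ≤ G t ω x := by
          intro t ht
          by_contra! hlt
          exact hcon t ht (hint _ (by rw [mem_ofPred_eq, h1]; exact hlt))
        have := h3 x fun s => (hge (max s 0) (le_max_right _ _)).trans
          (hF.anti ω x (le_max_left s 0))
        rw [hG0] at this
        exact hx.ne this
      · obtain ⟨t, ht, ht0⟩ :=
          ((h2.eventually (lt_mem_nhds hx)).and (eventually_ge_atTop (0:ℝ))).exists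
        refine ⟨t, ht0, hint _ ?_⟩
        have := hF.anti ω x ht0
        simp only [hG0] at this
        exact this.trans_lt ht
  have hRL : ∀ ω, R ω = {x | L ω x < 1}ᶜ := by
    intro ω
    ext x
    rw [← hL1, mem_compl_iff, mem_ofPred_eq, not_lt]
    exact ⟨fun h => h.ge, fun h => (hLrange ω x).2.antisymm h⟩
  exact ⟨⟨hA, hAinv, N, hFund, fun ω => by rw [hbasin, hRL]⟩, N, hFund, hbasin, hRL⟩
end
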